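/- arXiv:1503.04048 — 2 statements merged into one kernel-verified Lean document; each statement's English description precedes it below -/
import Mathlib

section
/- A nontrivial (at least two vertices) simple graph G of order n admits an orientation D such that γ_oso(D) = n if, and only if, G is bipartite. -/
/-!
If an orientation contains a directed path `u → v → w`, then `V ∖ {w}` is an OSODS
(`osods_erase_of_path`), so `γ_oso < n`. Hence `γ_oso = n` forces every vertex to be a source or a
sink, and the set of vertices with an out-neighbor is one side of a bipartition.

Conversely, in a bipartite graph orient every edge from the side `X` to the other side. A vertex
defending some `v ∉ S` lies in `X`; once it moves it has no in-neighbor and is left undominated.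
So the only OSODS is the whole vertex set.
-/

open Finset

variable {V : Type*}

/-- `S` is an out-dominating set of the digraph with arc relation `A`. -/
def OutDom (A : V → V → Prop) (S : Finset V) : Prop :=
  ∀ v : V, v ∉ S → ∃ u ∈ S, A u v

/-- `S` is an in-dominating set. -/
def InDom (A : V → V → Prop) (S : Finset V) : Prop :=
  ∀ v : V, v ∉ S → ∃ u ∈ S, A v u

/-- `S` is a dominating set of the underlying undirected graph of the digraph `A`. -/
def DomG (A : V → V → Prop) (S : Finset V) : Prop :=
  ∀ v : V, v ∉ S → ∃ u ∈ S, A u v ∨ A v u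

/-- Secure dominating set of the underlying undirected graph. -/
def SDS [DecidableEq V] (A : V → V → Prop) (S : Finset V) : Prop :=
  DomG A S ∧ ∀ v : V, v ∉ S → ∃ u ∈ S, (A u v ∨ A v u) ∧ DomG A (insert v (S.erase u))

/-- Out-secure dominating set (OSDS). -/
def OSDS [DecidableEq V] (A : V → V → Prop) (S : Finset V) : Prop :=
  DomG A S ∧ ∀ v : V, v ∉ S → ∃ u ∈ S, A u v ∧ DomG A (insert v (S.erase u))

/-- Secure out-dominating set (SODS). -/
def SODS [DecidableEq V] (A : V → V → Prop) (S : Finset V) : Prop :=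
  OutDom A S ∧ ∀ v : V, v ∉ S → ∃ u ∈ S, (A v u ∨ A u v) ∧ OutDom A (insert v (S.erase u))

/-- Out-secure out-dominating set (OSODS). -/
def OSODS [DecidableEq V] (A : V → V → Prop) (S : Finset V) : Prop :=
  OutDom A S ∧ ∀ v : V, v ∉ S → ∃ u ∈ S, A u v ∧ OutDom A (insert v (S.erase u))

/-- In-secure out-dominating set (ISODS). -/
def ISODS [DecidableEq V] (A : V → V → Prop) (S : Finset V) : Prop :=
  OutDom A S ∧ ∀ v : V, v ∉ S → ∃ u ∈ S, A v u ∧ OutDom A (insert v (S.erase u))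

/-- Twin dominating set. -/
def TwinDom (A : V → V → Prop) (S : Finset V) : Prop :=
  ∀ v : V, v ∉ S → (∃ u ∈ S, A v u) ∧ (∃ u ∈ S, A u v)

/-- The out-domination number `γ⁺`. -/
noncomputable def gammaPlus [Fintype V] (A : V → V → Prop) : ℕ :=
  sInf {k | ∃ S : Finset V, OutDom A S ∧ S.card = k}

/-- The in-domination number `γ⁻`. -/
noncomputable def gammaMinus [Fintype V] (A : V → V → Prop) : ℕ :=
  sInf {k | ∃ S : Finset V, InDom A S ∧ S.card = k}

/-- The secure domination number of the underlying undirected graph, `γ_s`. -/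
noncomputable def gammaS [Fintype V] [DecidableEq V] (A : V → V → Prop) : ℕ :=
  sInf {k | ∃ S : Finset V, SDS A S ∧ S.card = k}

/-- The out-secure domination number `γ_os`. -/
noncomputable def gammaOS [Fintype V] [DecidableEq V] (A : V → V → Prop) : ℕ :=
  sInf {k | ∃ S : Finset V, OSDS A S ∧ S.card = k}

/-- The secure out-domination number `γ_so`. -/
noncomputable def gammaSO [Fintype V] [DecidableEq V] (A : V → V → Prop) : ℕ :=
  sInf {k | ∃ S : Finset V, SODS A S ∧ S.card = k}

/-- The out-secure out-domination number `γ_oso`. -/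
noncomputable def gammaOSO [Fintype V] [DecidableEq V] (A : V → V → Prop) : ℕ :=
  sInf {k | ∃ S : Finset V, OSODS A S ∧ S.card = k}

/-- The in-secure out-domination number `γ_iso`. -/
noncomputable def gammaISO [Fintype V] [DecidableEq V] (A : V → V → Prop) : ℕ :=
  sInf {k | ∃ S : Finset V, ISODS A S ∧ S.card = k}

/-- The twin domination number `γ*`. -/
noncomputable def gammaTwin [Fintype V] (A : V → V → Prop) : ℕ :=
  sInf {k | ∃ S : Finset V, TwinDom A S ∧ S.card = k}

/-- Out-degree `d⁺(u)`. -/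
noncomputable def outDeg (A : V → V → Prop) (u : V) : ℕ := Nat.card {v | A u v}

/-- In-degree `d⁻(u)`. -/
noncomputable def inDeg (A : V → V → Prop) (u : V) : ℕ := Nat.card {v | A v u}

/-- Maximum out-degree `Δ⁺`. -/
noncomputable def maxOutDeg [Fintype V] (A : V → V → Prop) : ℕ :=
  Finset.univ.sup fun u => outDeg A u

/-- Minimum out-degree `δ⁺`. -/
noncomputable def minOutDeg (A : V → V → Prop) : ℕ := sInf (Set.range fun u => outDeg A u)

/-- Minimum in-degree `δ⁻`. -/
noncomputable def minInDeg (A : V → V → Prop) : ℕ := sInf (Set.range fun u => inDeg A u)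

/-- The set of out-private neighbors `pn⁺(u,S)`: vertices `w` with `N⁻[w] ∩ S = {u}`. -/
def pnPlus (A : V → V → Prop) (S : Finset V) (u : V) : Set V :=
  {w | {x | A x w ∨ x = w} ∩ ↑S = {u}}

/-- The set of in-private neighbors `pn⁻(u,S)`: vertices `w` with `N⁺[w] ∩ S = {u}`. -/
def pnMinus (A : V → V → Prop) (S : Finset V) (u : V) : Set V :=
  {w | {x | A w x ∨ x = w} ∩ ↑S = {u}}

/-- `A` is an orientation of the simple graph `G`. -/
def IsOrientation (G : SimpleGraph V) (A : V → V → Prop) : Prop :=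
  (∀ u v : V, G.Adj u v ↔ (A u v ∨ A v u)) ∧ (∀ u v : V, A u v → ¬ A v u)

/-- The arc relation of the directed path `P_n` on `Fin n`. -/
def pathArc (n : ℕ) : Fin n → Fin n → Prop := fun i j => (i : ℕ) + 1 = (j : ℕ)

/-- The arc relation of the directed cycle `C_n` on `Fin n`. -/
def cycleArc (n : ℕ) : Fin n → Fin n → Prop := fun i j => ((i : ℕ) + 1) % n = (j : ℕ)

/-- `G` is a bipartite graph. -/
def IsBip (G : SimpleGraph V) : Prop :=
  ∃ X : Set V, ∀ u v : V, G.Adj u v → (u ∈ X ↔ v ∉ X)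

/-- The whole vertex set is vacuously an OSODS, so `γ_oso` never exceeds the order. -/
lemma osods_univ [Fintype V] [DecidableEq V] (A : V → V → Prop) :
    OSODS A Finset.univ :=
  ⟨fun v hv => absurd (Finset.mem_univ v) hv, fun v hv => absurd (Finset.mem_univ v) hv⟩

/-- On a directed path `u → v → w`, the complement of `w` is an OSODS: `v` moves to `w`, after
which the vacated `v` is dominated by `u`. -/
lemma osods_erase_of_path [Fintype V] [DecidableEq V] {A : V → V → Prop}
    (hA : ∀ u v : V, A u v → ¬ A v u) {u v w : V} (huv : A u v) (hvw : A v w) :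
    OSODS A (Finset.univ.erase w) := by
  have hvw' : v ≠ w := fun h => hA v w hvw (h ▸ h ▸ hvw)
  have huv' : u ≠ v := fun h => hA u v huv (h ▸ h ▸ huv)
  have hdom : OutDom A (Finset.univ.erase w) := by
    intro x hx
    obtain rfl : x = w := by simpa using hx
    exact ⟨v, by simpa using hvw', hvw⟩
  refine ⟨hdom, fun x hx => ?_⟩
  obtain rfl : x = w := by simpa using hx
  refine ⟨v, by simpa using hvw', hvw, fun y hy => ?_⟩
  obtain rfl : y = v := by
    by_contra hyv
    by_cases hyx : y = x <;> simp [hyv, hyx] at hy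
  exact ⟨u, by by_cases hux : u = x <;> simp [huv', hux], huv⟩

/-- a nontrivial graph admits an orientation with `γ_oso = n` iff it is bipartite. -/
theorem stmt_5 [Fintype V] [DecidableEq V] (G : SimpleGraph V) (hn : 2 ≤ Fintype.card V) :
    (∃ A : V → V → Prop, IsOrientation G A ∧ gammaOSO A = Fintype.card V) ↔ IsBip G := by
  constructor
  · rintro ⟨A, ⟨hadj, hasym⟩, hγ⟩
    -- `γ_oso = n` rules out directed paths with two arcs.
    have hpath : ∀ u v w : V, A u v → ¬ A v w := by
      intro u v w huv hvw
      have hle : gammaOSO A ≤ (Finset.univ.erase w).card :=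
        Nat.sInf_le ⟨_, osods_erase_of_path hasym huv hvw, rfl⟩
      rw [Finset.card_erase_of_mem (Finset.mem_univ w), Finset.card_univ] at hle
      omega
    refine ⟨{x | ∃ y, A x y}, fun u v huv => ?_⟩
    rcases (hadj u v).1 huv with h | h
    · exact iff_of_true ⟨v, h⟩ fun ⟨w, hw⟩ => hpath u v w h hw
    · exact iff_of_false (fun ⟨w, hw⟩ => hpath v u w h hw) fun hv => hv ⟨u, h⟩
  · rintro ⟨X, hX⟩
    refine ⟨fun u v => G.Adj u v ∧ u ∈ X, ⟨fun u v => ?_, ?_⟩, ?_⟩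
    · have := hX u v
      have hc := G.adj_comm u v
      tauto
    · rintro u v ⟨huv, hu⟩ ⟨-, hv⟩
      exact (hX u v huv).1 hu hv
    · refine le_antisymm (Nat.sInf_le ⟨Finset.univ, osods_univ _, Finset.card_univ⟩)
        (le_csInf ⟨_, Finset.univ, osods_univ _, rfl⟩ ?_)
      rintro k ⟨S, ⟨-, hS⟩, rfl⟩
      suffices h : S = Finset.univ by rw [h, Finset.card_univ]
      rw [Finset.eq_univ_iff_forall]
      intro v
      by_contra hv
      obtain ⟨u, huS, ⟨-, huX⟩, hdom⟩ := hS v hv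
      have huv : u ≠ v := fun h => hv (h ▸ huS)
      -- The vacated `u` lies in `X`, hence is a source and cannot be dominated.
      obtain ⟨x, -, hxu, hxX⟩ := hdom u (by simp [huv])
      exact (hX x u hxu).1 hxX huX
end

section
/- Let D be any digraph without symmetric arcs (no pair of opposite arcs). Then γ_os(D) ≤ γ⁺(D) + γ⁻(D). -/
/-!
The union `S` of a minimum out-dominating set and a minimum in-dominating set is an OSDS.
Every vertex `w` outside `S` has both an in-neighbor and an out-neighbor in `S`, and these are
distinct because there are no symmetric arcs. Hence when an in-neighbor `u ∈ S` of `v` moves to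
`v`, each such `w` keeps a neighbor in `S ∖ {u}`, while `u` itself is dominated by `v`.
-/

open Finset

variable {V : Type*}

/-- The key step: in the absence of symmetric arcs, the in- and out-neighbor that a twin dominating
set provides are distinct, so losing one guard leaves the other. -/
theorem TwinDom.osds {V : Type*} [DecidableEq V] {A : V → V → Prop} {S : Finset V}
    (hsym : ∀ u v : V, A u v → ¬ A v u) (hS : TwinDom A S) : OSDS A S := by
  refine ⟨fun v hv => ?_, fun v hv => ?_⟩
  · obtain ⟨-, u, hu, huv⟩ := hS v hv
    exact ⟨u, hu, Or.inl huv⟩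
  obtain ⟨-, u, hu, huv⟩ := hS v hv
  refine ⟨u, hu, huv, fun w hw => ?_⟩
  by_cases hwu : w = u
  · subst hwu
    exact ⟨v, mem_insert_self _ _, Or.inr huv⟩
  have hwS : w ∉ S := fun h => hw (mem_insert_of_mem (mem_erase.2 ⟨hwu, h⟩))
  obtain ⟨⟨x, hx, hwx⟩, y, hy, hyw⟩ := hS w hwS
  by_cases hxu : x = u
  · have hyu : y ≠ u := by
      rintro rfl
      subst hxu
      exact hsym _ _ hwx hyw
    exact ⟨y, mem_insert_of_mem (mem_erase.2 ⟨hyu, hy⟩), Or.inl hyw⟩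
  · exact ⟨x, mem_insert_of_mem (mem_erase.2 ⟨hxu, hx⟩), Or.inr hwx⟩

/-- `γ_os(D) ≤ γ⁺(D) + γ⁻(D)` for digraphs without symmetric arcs. -/
theorem stmt_13 [Fintype V] [DecidableEq V] (A : V → V → Prop) (hloop : ∀ v : V, ¬ A v v)
    (hsym : ∀ u v : V, A u v → ¬ A v u) :
    gammaOS A ≤ gammaPlus A + gammaMinus A := by
  -- The infima are attained: `univ` is vacuously out- and in-dominating.
  obtain ⟨P, hP, hPc⟩ : ∃ S : Finset V, OutDom A S ∧ S.card = gammaPlus A :=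
    Nat.sInf_mem (s := {k | ∃ S : Finset V, OutDom A S ∧ S.card = k})
      ⟨_, univ, fun v hv => absurd (mem_univ v) hv, rfl⟩
  obtain ⟨Q, hQ, hQc⟩ : ∃ S : Finset V, InDom A S ∧ S.card = gammaMinus A :=
    Nat.sInf_mem (s := {k | ∃ S : Finset V, InDom A S ∧ S.card = k})
      ⟨_, univ, fun v hv => absurd (mem_univ v) hv, rfl⟩
  have hT : TwinDom A (P ∪ Q) := by
    intro v hv
    rw [mem_union, not_or] at hv
    obtain ⟨x, hx, hxv⟩ := hP v hv.1
    obtain ⟨y, hy, hvy⟩ := hQ v hv.2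
    exact ⟨⟨y, mem_union_right _ hy, hvy⟩, x, mem_union_left _ hx, hxv⟩
  calc gammaOS A ≤ (P ∪ Q).card := Nat.sInf_le ⟨P ∪ Q, hT.osds hsym, rfl⟩
    _ ≤ P.card + Q.card := card_union_le _ _
    _ = gammaPlus A + gammaMinus A := by rw [hPc, hQc]
end
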